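/- Let b be a random vector uniformly distributed on the unit sphere S^{m−1} of ℝ^m, let 1 ≤ s < m be integers, and let κ be a constant with (m−s)/m < κ < 1. Then P[ Σ_{i=1}^{m−s} b_i² ≥ κ ] ≤ 2e^{−ε²}, where ε = (m−s)B / (A + √(A² + 2(m−s)B)), A = √(m−s) + κ√s/(1−κ), and B = κs/((1−κ)(m−s)) − 1. -/

import Mathlib

open MeasureTheory Finset

/-- The rotation-invariant probability measure on the unit sphere `S^{m−1}` of `ℝ^m`,
encoded as a probability measure on `ℝ^m` concentrated on the unit sphere and invariant
under every linear isometry of `ℝ^m`. -/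
def IsUniformOnSphere {m : ℕ} (ν : Measure (EuclideanSpace ℝ (Fin m))) : Prop :=
  IsProbabilityMeasure ν ∧ ν {x | ‖x‖ = 1}ᶜ = 0 ∧
    ∀ O : EuclideanSpace ℝ (Fin m) ≃ₗᵢ[ℝ] EuclideanSpace ℝ (Fin m),
      Measure.map O ν = ν

/-!
The uniform law on the sphere is the law of `g / ‖g‖` for a standard Gaussian vector `g`, so it
gives a cone the probability that `g` lies in it. On the sphere `κ ≤ ∑_{i ∈ S} b i ^ 2` reads
`0 ≤ ∑ i, w i * b i ^ 2` with `w i = 1 - κ` on `S` and `w i = -κ` off `S`, and this condition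
defines a cone. A single Chernoff bound for the signed weighted `χ²` variable
`∑ i, w i * g i ^ 2`, in the manner of Laurent and Massart, then gives `exp (-ε ^ 2)`, where `ε` is
the positive root of `2 * ε ^ 2 + 2 * A * ε = (m - s) * B`. Bounding the `χ²` variables of `S` and
of its complement separately would cost a factor `2`.
-/

open ProbabilityTheory

section RotationInvariance

variable {E : Type*} [NormedAddCommGroup E] [InnerProductSpace ℝ E] [MeasurableSpace E]
  {μ ν : Measure E}

/-- Invariance of a measure under all linear isometric automorphisms, reflections included. -/
def IsIsometryInvariant (μ : Measure E) : Prop :=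
  ∀ O : E ≃ₗᵢ[ℝ] E, μ.map O = μ

variable [BorelSpace E]

lemma IsIsometryInvariant.charFun_eq_of_norm_eq (hμ : IsIsometryInvariant μ) {u v : E}
    (h : ‖u‖ = ‖v‖) : charFun μ u = charFun μ v := by
  let O := Submodule.reflection (ℝ ∙ (u - v))ᗮ
  have hO : O u = v := Submodule.reflection_sub h
  conv_rhs => rw [← hμ O]
  rw [charFun_apply, charFun_apply, integral_map O.continuous.aemeasurable
    (Continuous.measurable (by fun_prop)).aestronglyMeasurable]
  simp_rw [← hO, LinearIsometryEquiv.inner_map_map]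

lemma IsIsometryInvariant.charFun_eq_integral [IsProbabilityMeasure ν]
    (hμ : IsIsometryInvariant μ) (hν : ∀ᵐ y ∂ν, ‖y‖ = 1) (u : E) :
    charFun μ u = ∫ y, charFun μ (‖u‖ • y) ∂ν := by
  have h_const : ∀ᵐ y ∂ν, charFun μ (‖u‖ • y) = charFun μ u := by
    filter_upwards [hν] with y hy
    exact hμ.charFun_eq_of_norm_eq (by simp [norm_smul, hy])
  simp [integral_congr_ae h_const]

lemma integral_charFun_smul_comm [SecondCountableTopology E] [IsFiniteMeasure μ]
    [IsFiniteMeasure ν] (r : ℝ) :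
    ∫ y, charFun μ (r • y) ∂ν = ∫ x, charFun ν (r • x) ∂μ := by
  simp_rw [charFun_apply]
  rw [integral_integral_swap]
  · simp_rw [real_inner_smul_right, real_inner_comm]
  · refine Integrable.of_bound (C := 1) (Measurable.aestronglyMeasurable (by fun_prop)) ?_
    exact Filter.Eventually.of_forall fun p ↦ (Complex.norm_exp_ofReal_mul_I _).le

theorem IsIsometryInvariant.eq_of_norm_eq_one [CompleteSpace E] [SecondCountableTopology E]
    [IsProbabilityMeasure μ] [IsProbabilityMeasure ν]
    (hμ : IsIsometryInvariant μ) (hμ_norm : ∀ᵐ x ∂μ, ‖x‖ = 1)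
    (hν : IsIsometryInvariant ν) (hν_norm : ∀ᵐ x ∂ν, ‖x‖ = 1) : μ = ν := by
  refine Measure.ext_of_charFun (funext fun u ↦ ?_)
  rw [hμ.charFun_eq_integral hν_norm, hν.charFun_eq_integral hμ_norm, integral_charFun_smul_comm]

lemma IsIsometryInvariant.map_inv_norm_smul (hμ : IsIsometryInvariant μ)
    [SecondCountableTopology E] : IsIsometryInvariant (μ.map fun x ↦ ‖x‖⁻¹ • x) := by
  intro O
  conv_rhs => rw [← hμ O]
  rw [Measure.map_map (by fun_prop) (by fun_prop), Measure.map_map (by fun_prop) (by fun_prop)]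
  congr 1
  ext x
  simp

lemma ae_norm_eq_one_map_inv_norm_smul [SecondCountableTopology E] (hμ : μ {0} = 0) :
    ∀ᵐ x ∂μ.map (fun x ↦ ‖x‖⁻¹ • x), ‖x‖ = 1 := by
  rw [ae_map_iff (by fun_prop) (measurableSet_eq_fun measurable_norm measurable_const)]
  filter_upwards [compl_mem_ae_iff.2 hμ] with x hx
  simp [norm_smul, show x ≠ 0 from hx]

end RotationInvariance

section StdGaussian

variable {E : Type*} [NormedAddCommGroup E] [InnerProductSpace ℝ E] [FiniteDimensional ℝ E]
  [MeasurableSpace E] [BorelSpace E]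

lemma isIsometryInvariant_stdGaussian : IsIsometryInvariant (stdGaussian E) :=
  fun O ↦ stdGaussian_map O

instance nullSingletonClass_stdGaussian [Nontrivial E] : NullSingletonClass (stdGaussian E) := by
  refine IsGaussian.nullSingletonClass fun x h ↦ ?_
  obtain ⟨L, hL, -⟩ := exists_dual_vector' ℝ x
  simpa [h, hL] using variance_dual_stdGaussian L

theorem IsIsometryInvariant.eq_map_stdGaussian {ν : Measure E} [IsProbabilityMeasure ν]
    (hν : IsIsometryInvariant ν) (hν_norm : ∀ᵐ x ∂ν, ‖x‖ = 1) :
    ν = (stdGaussian E).map fun x ↦ ‖x‖⁻¹ • x := by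
  obtain ⟨x, hx⟩ := hν_norm.exists
  have : Nontrivial E := ⟨x, 0, by rintro rfl; simp at hx⟩
  have : IsProbabilityMeasure ((stdGaussian E).map fun x ↦ ‖x‖⁻¹ • x) :=
    Measure.isProbabilityMeasure_map (by fun_prop)
  exact hν.eq_of_norm_eq_one hν_norm isIsometryInvariant_stdGaussian.map_inv_norm_smul
    (ae_norm_eq_one_map_inv_norm_smul (measure_singleton 0))

theorem IsIsometryInvariant.measure_cone_eq_stdGaussian {ν : Measure E} [IsProbabilityMeasure ν]
    (hν : IsIsometryInvariant ν) (hν_norm : ∀ᵐ x ∂ν, ‖x‖ = 1) {C : Set E} (hC : MeasurableSet C)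
    (hC_smul : ∀ r : ℝ, 0 < r → ∀ x, r • x ∈ C ↔ x ∈ C) : ν C = stdGaussian E C := by
  rw [hν.eq_map_stdGaussian hν_norm, Measure.map_apply (by fun_prop) hC]
  congr 1
  ext x
  rcases eq_or_ne x 0 with rfl | hx
  · simp
  · exact hC_smul _ (inv_pos.2 (norm_pos_iff.2 hx)) x

end StdGaussian

section WeightedChiSquared

open Real
open scoped NNReal

lemma mgf_sq_gaussianReal {v : ℝ≥0} {t : ℝ} (ht : 2 * v * t < 1) :
    mgf (fun x ↦ x ^ 2) (gaussianReal 0 v) t = (√(1 - 2 * v * t))⁻¹ := by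
  rcases eq_or_ne v 0 with rfl | hv
  · simp [gaussianReal_zero_var, mgf_dirac']
  have h_density (x : ℝ) : gaussianPDFReal 0 v x • exp (t * x ^ 2) =
      (√(2 * π * v))⁻¹ * exp (-((1 - 2 * v * t) / (2 * v)) * x ^ 2) := by
    rw [gaussianPDFReal, smul_eq_mul, mul_assoc, ← exp_add]
    congr 2
    field_simp
    ring
  have : (0 : ℝ) < v := by positivity
  rw [mgf, integral_gaussianReal_eq_integral_smul hv]
  simp_rw [h_density]
  rw [integral_const_mul, integral_gaussian, ← sqrt_inv, ← sqrt_inv, ← sqrt_mul (by positivity)]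
  congr 1
  field_simp

lemma neg_log_one_sub_le_of_nonneg {x : ℝ} (hx₀ : 0 ≤ x) (hx₁ : x < 1) :
    -log (1 - x) ≤ x + x ^ 2 / (2 * (1 - x)) := by
  have hy : 0 < 1 - x := sub_pos.2 hx₁
  have h_log : 0 ≤ -log (1 - x) := neg_nonneg.2 (log_nonpos hy.le (by linarith))
  calc -log (1 - x) ≤ sinh (-log (1 - x)) := self_le_sinh_iff.2 h_log
    _ = x + x ^ 2 / (2 * (1 - x)) := by
      rw [sinh_neg, sinh_log hy]
      field_simp
      ring

lemma neg_log_one_sub_le_of_nonpos {x : ℝ} (hx : x ≤ 0) :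
    -log (1 - x) ≤ x + x ^ 2 / 2 := by
  have h_log : 2 * -x / (-x + 2) ≤ log (1 - x) := by
    simpa only [sub_eq_add_neg] using le_log_one_add_of_nonneg (neg_nonneg.2 hx)
  have h_frac : -x - x ^ 2 / 2 ≤ 2 * -x / (-x + 2) := by
    rw [le_div_iff₀ (by linarith)]
    nlinarith [pow_nonneg (neg_nonneg.2 hx) 3]
  linarith

lemma neg_log_one_sub_le {x z : ℝ} (hxz : x ≤ z) (hz₀ : 0 ≤ z) (hz₁ : z < 1) :
    -log (1 - x) ≤ x + x ^ 2 / (2 * (1 - z)) := by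
  have : 0 < 1 - z := sub_pos.2 hz₁
  rcases le_total 0 x with hx | hx
  · refine (neg_log_one_sub_le_of_nonneg hx (hxz.trans_lt hz₁)).trans ?_
    gcongr
  · refine (neg_log_one_sub_le_of_nonpos hx).trans ?_
    gcongr
    linarith

lemma inv_sqrt_one_sub_two_mul_le_exp {c d : ℝ} (hcd : c ≤ d) (hd₀ : 0 ≤ d) (hd : 2 * d < 1) :
    (√(1 - 2 * c))⁻¹ ≤ exp (c + c ^ 2 / (1 - 2 * d)) := by
  have hc : 0 < 1 - 2 * c := by linarith
  have h_log := neg_log_one_sub_le (x := 2 * c) (z := 2 * d) (by linarith) (by linarith) hd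
  rw [← log_le_iff_le_exp (by positivity), log_inv, log_sqrt hc.le]
  have h_frac : (2 * c) ^ 2 / (2 * (1 - 2 * d)) = 2 * (c ^ 2 / (1 - 2 * d)) := by
    have : 1 - 2 * d ≠ 0 := by linarith
    field_simp
  linarith

variable {ι Ω : Type*} {mΩ : MeasurableSpace Ω} {P : Measure Ω} {X : ι → Ω → ℝ}
  {s : Finset ι} {w : ι → ℝ} {M V t : ℝ}

lemma mgf_sum_mul_sq (hX : ∀ i, HasLaw (X i) (gaussianReal 0 1) P) (h_indep : iIndepFun X P)
    (hw : ∀ i ∈ s, 2 * (t * w i) < 1) :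
    mgf (fun ω ↦ ∑ i ∈ s, w i * X i ω ^ 2) P t = ∏ i ∈ s, (√(1 - 2 * (t * w i)))⁻¹ := by
  have hX_meas i : AEMeasurable (X i) P := (hX i).aemeasurable
  have h_indep_sq : iIndepFun (fun i ω ↦ w i * X i ω ^ 2) P :=
    h_indep.comp (fun i x ↦ w i * x ^ 2) fun i ↦ by fun_prop
  have h_factor i (hi : i ∈ s) :
      mgf (fun ω ↦ w i * X i ω ^ 2) P t = (√(1 - 2 * (t * w i)))⁻¹ := by
    have h_map := mgf_map (X := fun x ↦ x ^ 2) (t := t * w i) (hX_meas i)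
      (Measurable.aestronglyMeasurable (by fun_prop))
    rw [(hX i).map_eq, mgf_sq_gaussianReal (by simpa using hw i hi)] at h_map
    rw [mgf_const_mul, mul_comm (w i)]
    exact h_map.symm.trans (by simp)
  rw [← prod_congr rfl h_factor, ← h_indep_sq.mgf_sum₀ fun i ↦ by fun_prop]
  congr 1
  ext ω
  rw [Finset.sum_apply]

lemma mgf_sum_mul_sq_le (hX : ∀ i, HasLaw (X i) (gaussianReal 0 1) P) (h_indep : iIndepFun X P)
    (hM : 0 ≤ M) (hwM : ∀ i ∈ s, w i ≤ M) (ht : 0 ≤ t) (htM : 2 * (t * M) < 1) :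
    mgf (fun ω ↦ ∑ i ∈ s, w i * X i ω ^ 2) P t ≤
      exp (t * ∑ i ∈ s, w i + t ^ 2 * (∑ i ∈ s, w i ^ 2) / (1 - 2 * (t * M))) := by
  have htw i (hi : i ∈ s) : t * w i ≤ t * M := mul_le_mul_of_nonneg_left (hwM i hi) ht
  rw [mgf_sum_mul_sq hX h_indep fun i hi ↦ by linarith [htw i hi]]
  calc ∏ i ∈ s, (√(1 - 2 * (t * w i)))⁻¹
      ≤ ∏ i ∈ s, exp (t * w i + (t * w i) ^ 2 / (1 - 2 * (t * M))) := by
        gcongr with i hi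
        exact inv_sqrt_one_sub_two_mul_le_exp (htw i hi) (by positivity) htM
    _ = exp (t * ∑ i ∈ s, w i + t ^ 2 * (∑ i ∈ s, w i ^ 2) / (1 - 2 * (t * M))) := by
        rw [← exp_sum, sum_add_distrib, mul_sum, mul_sum, sum_div]
        simp_rw [mul_pow]

lemma integrable_exp_sum_mul_sq (hX : ∀ i, HasLaw (X i) (gaussianReal 0 1) P)
    (h_indep : iIndepFun X P) (hw : ∀ i ∈ s, 2 * (t * w i) < 1) :
    Integrable (fun ω ↦ exp (t * ∑ i ∈ s, w i * X i ω ^ 2)) P := by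
  have := h_indep.isProbabilityMeasure
  rw [← mgf_pos_iff (X := fun ω ↦ ∑ i ∈ s, w i * X i ω ^ 2), mgf_sum_mul_sq hX h_indep hw]
  exact prod_pos fun i hi ↦ inv_pos.2 (sqrt_pos.2 (sub_pos.2 (hw i hi)))

theorem measureReal_sum_mul_sq_ge_le (hX : ∀ i, HasLaw (X i) (gaussianReal 0 1) P)
    (h_indep : iIndepFun X P) (hM : 0 ≤ M) (hwM : ∀ i ∈ s, w i ≤ M)
    (hV : 0 < V) (hwV : ∑ i ∈ s, w i ^ 2 ≤ V ^ 2) (ht : 0 ≤ t) :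
    P.real {ω | ∑ i ∈ s, w i + 2 * V * t + 2 * M * t ^ 2 ≤ ∑ i ∈ s, w i * X i ω ^ 2} ≤
      exp (-t ^ 2) := by
  have := h_indep.isProbabilityMeasure
  -- `l` minimizes the exponent `-l * (2 * V * t + 2 * M * t ^ 2) + l ^ 2 * V ^ 2 / (1 - 2 * l * M)`
  set l := t / (V + 2 * M * t) with hl
  have hl₀ : 0 ≤ l := by positivity
  have hlM : 1 - 2 * (l * M) = V / (V + 2 * M * t) := by
    rw [hl]
    field_simp
    ring
  have hlM' : 2 * (l * M) < 1 := by
    have : 0 < V / (V + 2 * M * t) := by positivity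
    linarith
  have hlw i (hi : i ∈ s) : 2 * (l * w i) < 1 := by
    linarith [mul_le_mul_of_nonneg_left (hwM i hi) hl₀]
  have h_exponent : -l * (2 * V * t + 2 * M * t ^ 2) + l ^ 2 * V ^ 2 / (1 - 2 * (l * M)) =
      -t ^ 2 := by
    rw [hlM, hl]
    field_simp
    ring
  refine (measure_ge_le_exp_mul_mgf _ hl₀ (integrable_exp_sum_mul_sq hX h_indep hlw)).trans ?_
  refine (mul_le_mul_of_nonneg_left (mgf_sum_mul_sq_le hX h_indep hM hwM hl₀ hlM')
    (exp_nonneg _)).trans ?_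
  rw [← exp_add, exp_le_exp, ← h_exponent]
  have h_var : l ^ 2 * (∑ i ∈ s, w i ^ 2) / (1 - 2 * (l * M)) ≤
      l ^ 2 * V ^ 2 / (1 - 2 * (l * M)) := by
    have : 0 < 1 - 2 * (l * M) := by linarith
    gcongr
  linarith

end WeightedChiSquared

section Sphere

variable {ι : Type*} [Fintype ι]

lemma hasLaw_eval_stdGaussian (i : ι) :
    HasLaw (fun x ↦ x i) (gaussianReal 0 1) (stdGaussian (EuclideanSpace ℝ ι)) := by
  classical
  have h := (measurePreserving_eval_multivariateGaussian (μ := 0)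
    (Matrix.PosSemidef.one (n := ι) (R := ℝ)) (i := i)).hasLaw
  simpa using h

lemma iIndepFun_eval_stdGaussian :
    iIndepFun (fun i x ↦ x i) (stdGaussian (EuclideanSpace ℝ ι)) := by
  rw [iIndepFun_iff_map_fun_eq_pi_map fun i ↦ by fun_prop, ← map_pi_eq_stdGaussian,
    Measure.map_map (by fun_prop) (by fun_prop), map_pi_eq_stdGaussian]
  simp_rw [(hasLaw_eval_stdGaussian _).map_eq]
  exact Measure.map_id

variable {ν : Measure (EuclideanSpace ℝ ι)} [IsProbabilityMeasure ν]

theorem measureReal_sphere_sum_mul_sq_nonneg_le (hν : IsIsometryInvariant ν)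
    (hν_norm : ∀ᵐ b ∂ν, ‖b‖ = 1) {w : ι → ℝ} {M V t : ℝ} (hM : 0 ≤ M) (hwM : ∀ i, w i ≤ M)
    (hV : 0 < V) (hwV : ∑ i, w i ^ 2 ≤ V ^ 2) (ht : 0 ≤ t)
    (h : ∑ i, w i + 2 * V * t + 2 * M * t ^ 2 ≤ 0) :
    ν.real {b | 0 ≤ ∑ i, w i * b i ^ 2} ≤ Real.exp (-t ^ 2) := by
  have h_cone : ν {b | 0 ≤ ∑ i, w i * b i ^ 2} =
      stdGaussian (EuclideanSpace ℝ ι) {b | 0 ≤ ∑ i, w i * b i ^ 2} := by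
    refine hν.measure_cone_eq_stdGaussian hν_norm
      (measurableSet_le measurable_const (by fun_prop)) fun r hr x ↦ ?_
    have h_smul : ∑ i, w i * (r • x) i ^ 2 = r ^ 2 * ∑ i, w i * x i ^ 2 := by
      rw [mul_sum]
      exact sum_congr rfl fun i _ ↦ by rw [PiLp.smul_apply, smul_eq_mul]; ring
    simp only [Set.mem_ofPred_eq, h_smul, mul_nonneg_iff_of_pos_left (pow_pos hr 2)]
  rw [measureReal_def, h_cone, ← measureReal_def]
  exact (measureReal_mono fun x hx ↦ h.trans hx).trans (measureReal_sum_mul_sq_ge_le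
    hasLaw_eval_stdGaussian iIndepFun_eval_stdGaussian hM (fun i _ ↦ hwM i) hV hwV ht)

theorem measureReal_sphere_sum_sq_ge_le [DecidableEq ι] (hν : IsIsometryInvariant ν)
    (hν_norm : ∀ᵐ b ∂ν, ‖b‖ = 1) {S : Finset ι} (hS : S.Nonempty) {κ t : ℝ} (hκ₀ : 0 ≤ κ)
    (hκ₁ : κ < 1) (ht : 0 ≤ t)
    (h : 2 * ((1 - κ) * √(#S) + κ * √(#Sᶜ)) * t + 2 * (1 - κ) * t ^ 2 ≤
      κ * #Sᶜ - (1 - κ) * #S) :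
    ν.real {b | κ ≤ ∑ i ∈ S, b i ^ 2} ≤ Real.exp (-t ^ 2) := by
  have hκ : 0 < 1 - κ := sub_pos.2 hκ₁
  have : (0 : ℝ) < #S := by exact_mod_cast hS.card_pos
  have h_card : (Fintype.card ι : ℝ) = #S + #Sᶜ := by exact_mod_cast (card_add_card_compl S).symm
  set w : ι → ℝ := fun i ↦ (if i ∈ S then 1 else 0) - κ with hw
  have hw_le (i : ι) : w i ≤ 1 - κ := by simp only [hw]; split_ifs <;> linarith
  have hw_sum : ∑ i, w i = (1 - κ) * #S - κ * #Sᶜ := by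
    simp only [hw, sum_sub_distrib, sum_boole, filter_univ_mem, sum_const, card_univ, nsmul_eq_mul,
      h_card]
    ring
  have hw_sum_sq : ∑ i, w i ^ 2 = (1 - κ) ^ 2 * #S + κ ^ 2 * #Sᶜ := by
    have h_sq (i : ι) : w i ^ 2 = (1 - 2 * κ) * (if i ∈ S then 1 else 0) + κ ^ 2 := by
      simp only [hw]; split_ifs <;> ring
    simp only [h_sq, sum_add_distrib, ← mul_sum, sum_boole, filter_univ_mem, sum_const, card_univ,
      nsmul_eq_mul, h_card]
    ring
  have hV : ∑ i, w i ^ 2 ≤ ((1 - κ) * √(#S) + κ * √(#Sᶜ)) ^ 2 := by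
    have h_cross : 0 ≤ 2 * ((1 - κ) * √(#S)) * (κ * √(#Sᶜ)) := by positivity
    rw [hw_sum_sq, add_sq, mul_pow, mul_pow, Real.sq_sqrt (by positivity),
      Real.sq_sqrt (by positivity)]
    linarith
  have h_event : {b | κ ≤ ∑ i ∈ S, b i ^ 2} =ᵐ[ν] {b | 0 ≤ ∑ i, w i * b i ^ 2} := by
    refine Filter.eventuallyEq_set.2 ?_
    filter_upwards [hν_norm] with b hb
    have h_norm : ∑ i, b i ^ 2 = 1 := by rw [← EuclideanSpace.real_norm_sq_eq, hb, one_pow]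
    have h_form : ∑ i, w i * b i ^ 2 = ∑ i ∈ S, b i ^ 2 - κ := by
      simp [hw, sub_mul, sum_sub_distrib, ← mul_sum, h_norm]
    simp only [h_form, sub_nonneg]
  rw [measureReal_congr h_event]
  exact measureReal_sphere_sum_mul_sq_nonneg_le hν hν_norm hκ.le hw_le (by positivity) hV ht
    (by linarith)

end Sphere

lemma two_mul_mul_add_two_mul_sq_of_eq_div {A N ε : ℝ} (hA : 0 < A) (hN : 0 ≤ N)
    (hε : ε = N / (A + √(A ^ 2 + 2 * N))) : 2 * A * ε + 2 * ε ^ 2 = N := by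
  have h_sq : √(A ^ 2 + 2 * N) ^ 2 = A ^ 2 + 2 * N := Real.sq_sqrt (by positivity)
  have h_root : ε = (√(A ^ 2 + 2 * N) - A) / 2 := by
    rw [hε, div_eq_div_iff (by positivity) two_ne_zero]
    linear_combination -h_sq
  rw [h_root]
  linear_combination h_sq / 2

theorem stmt_17_general {ι : Type*} [Fintype ι] [DecidableEq ι]
    {ν : Measure (EuclideanSpace ℝ ι)} [IsProbabilityMeasure ν] (hν : IsIsometryInvariant ν)
    (hν_norm : ∀ᵐ b ∂ν, ‖b‖ = 1) {S : Finset ι} (hS : S.Nonempty) {κ : ℝ}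
    (hκl : (#S : ℝ) / Fintype.card ι ≤ κ) (hκu : κ < 1) {A B ε : ℝ}
    (hA : A = √(#S) + κ * √(#Sᶜ) / (1 - κ)) (hB : B = κ * #Sᶜ / ((1 - κ) * #S) - 1)
    (hε : ε = #S * B / (A + √(A ^ 2 + 2 * #S * B))) :
    ν.real {b | κ ≤ ∑ i ∈ S, b i ^ 2} ≤ Real.exp (-ε ^ 2) := by
  have hκ : 0 < 1 - κ := sub_pos.2 hκu
  have : (0 : ℝ) < #S := by exact_mod_cast hS.card_pos
  have h_card : (Fintype.card ι : ℝ) = #S + #Sᶜ := by exact_mod_cast (card_add_card_compl S).symm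
  have hκ₀ : 0 ≤ κ := le_trans (by positivity) hκl
  have hA_mul : (1 - κ) * A = (1 - κ) * √(#S) + κ * √(#Sᶜ) := by rw [hA]; field_simp
  have hB_mul : (1 - κ) * (#S * B) = κ * #Sᶜ - (1 - κ) * #S := by rw [hB]; field_simp
  have hA_pos : 0 < A := by rw [hA]; positivity
  have hB_nonneg : 0 ≤ #S * B := by
    rw [h_card, div_le_iff₀ (by positivity)] at hκl
    exact nonneg_of_mul_nonneg_right (by linarith) hκ
  rw [mul_assoc] at hε
  have h_quadratic := two_mul_mul_add_two_mul_sq_of_eq_div hA_pos hB_nonneg hε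
  refine measureReal_sphere_sum_sq_ge_le hν hν_norm hS hκ₀ hκu (hε ▸ by positivity) ?_
  rw [← hA_mul, ← hB_mul, ← h_quadratic]
  exact le_of_eq (by ring)

/-- Let `b` be uniform on `S^{m−1}`, `1 ≤ s < m`, and `(m−s)/m < κ < 1`.
Then `P[∑_{i=1}^{m−s} b_i² ≥ κ] ≤ 2e^{−ε²}`, where
`ε = (m−s)B/(A + √(A² + 2(m−s)B))`, `A = √(m−s) + κ√s/(1−κ)`,
`B = κs/((1−κ)(m−s)) − 1`. -/
theorem stmt_17 (m s : ℕ) (hs : 1 ≤ s) (hsm : s < m)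
    (ν : Measure (EuclideanSpace ℝ (Fin m))) (hν : IsUniformOnSphere ν)
    (κ : ℝ) (hκl : ((m : ℝ) - s) / m < κ) (hκu : κ < 1)
    (A B ε : ℝ)
    (hA : A = Real.sqrt ((m : ℝ) - s) + κ * Real.sqrt s / (1 - κ))
    (hB : B = κ * s / ((1 - κ) * ((m : ℝ) - s)) - 1)
    (hε : ε = ((m : ℝ) - s) * B / (A + Real.sqrt (A ^ 2 + 2 * ((m : ℝ) - s) * B))) :
    ν {b | κ ≤ ∑ i ∈ univ.filter (fun i : Fin m => (i : ℕ) < m - s), b i ^ 2} ≤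
      ENNReal.ofReal (2 * Real.exp (-ε ^ 2)) := by
  have := hν.1
  have hcast : ((m - s : ℕ) : ℝ) = m - s := Nat.cast_sub hsm.le
  set S := univ.filter fun i : Fin m ↦ (i : ℕ) < m - s with hS
  have hS_card : #S = m - s := by rw [hS, Fin.card_filter_val_lt]; lia
  have hSc_card : #Sᶜ = s := by rw [card_compl, hS_card, Fintype.card_fin]; lia
  have h_bound : ν.real {b | κ ≤ ∑ i ∈ S, b i ^ 2} ≤ Real.exp (-ε ^ 2) := by
    refine stmt_17_general hν.2.2 hν.2.1 (card_pos.1 (by lia)) ?_ hκu (A := A) (B := B) ?_ ?_ ?_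
      <;> rw [hS_card, hcast]
    · simpa using hκl.le
    · rwa [hSc_card]
    · rwa [hSc_card]
    · exact hε
  rw [← ofReal_measureReal]
  exact ENNReal.ofReal_le_ofReal (by linarith [Real.exp_pos (-ε ^ 2)])
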